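/- arXiv:2312.05910 — 3 statements merged into one kernel-verified Lean document; each statement's English description precedes it below -/
import Mathlib

section
/- In the discrete GPSSM setting, the evidence lower bound decomposes exactly into four interpretable terms: L = ∑_{u,x} Q(u,x) · ∑_{t<T} Real.log (emit (x (t+1)) (y t)) − KL(q0‖p0) − KL(qU‖pU) − ∑_{u,x} Q(u,x) · ∑_{t<T} Real.log (qtrans t u (x t) (x (t+1)) / trans u (x t) (x (t+1))), where the first sum over (u, x) ranges over U × (Fin (T+1) → X). (Paper's Theorem 1, stated for finite state, observation, and inducing-output spaces.) -/
/-!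
On a fixed pair `(u, x)` all factors are positive, so the logarithm of the density ratio is the sum
of an emission part, minus the logarithms of `q0 / p0` and `qU / pU`, minus a transition part.
Averaging against the variational density is linear, so it remains to average the two middle terms,
which depend only on `x 0` and on `u`. Since each transition kernel is normalised, summing a Markov
path density over all trajectories leaves only its initial factor (`sum_path_mul_prod`); hence the
marginals of `x 0` and `u` are `q0` and `qU`, and the averages are the two KL divergences.
-/

open Finset

/-- Marginalising a Markov path weight to its initial state. The initial weight `f` is arbitrary,
which lets the induction peel off the first state and reuse the first kernel as the initial
weight of the shortened path. -/
theorem sum_path_mul_prod {X : Type} [Fintype X] {T : ℕ} (k : Fin T → X → X → ℝ)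
    (hk : ∀ t x, ∑ x', k t x x' = 1) (f : X → ℝ) :
    ∑ x : Fin (T + 1) → X, f (x 0) * ∏ t : Fin T, k t (x t.castSucc) (x t.succ) =
      ∑ a, f a := by
  induction T generalizing f with
  | zero =>
    simpa using (Equiv.funUnique (Fin 1) X).sum_comp f
  | succ n ih =>
    rw [← (Fin.consEquiv (fun _ : Fin (n + 2) => X)).sum_comp, Fintype.sum_prod_type]
    refine Finset.sum_congr rfl fun a _ => ?_
    have h := ih (fun t => k t.succ) (fun t => hk t.succ) (k 0 a)
    rw [hk] at h
    simp only [Fin.consEquiv_apply, Fin.cons_zero, Fin.prod_univ_succ (n := n), Fin.castSucc_zero,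
      Fin.cons_succ, ← Fin.succ_castSucc, ← Finset.mul_sum, h, mul_one]

/-- **Paper's Theorem 1 (discrete GPSSM setting).**
The evidence lower bound decomposes exactly into four interpretable terms:
reconstruction, KL on the initial state, KL on the inducing outputs, and a
transition regularization term. -/
theorem gpssm_elbo_decomposition
    {T : ℕ} (hT : 1 ≤ T)
    {U X Y : Type} [Fintype U] [Fintype X] [Fintype Y]
    [Nonempty U] [Nonempty X] [Nonempty Y]
    (y : Fin T → Y)
    (pU : U → ℝ) (hpU_pos : ∀ u, 0 < pU u) (hpU_sum : ∑ u, pU u = 1)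
    (p0 : X → ℝ) (hp0_pos : ∀ x, 0 < p0 x) (hp0_sum : ∑ x, p0 x = 1)
    (trans : U → X → X → ℝ) (htrans_pos : ∀ u x x', 0 < trans u x x')
    (htrans_sum : ∀ u x, ∑ x', trans u x x' = 1)
    (emit : X → Y → ℝ) (hemit_pos : ∀ x yy, 0 < emit x yy)
    (qU : U → ℝ) (hqU_pos : ∀ u, 0 < qU u) (hqU_sum : ∑ u, qU u = 1)
    (q0 : X → ℝ) (hq0_pos : ∀ x, 0 < q0 x) (hq0_sum : ∑ x, q0 x = 1)
    (qtrans : Fin T → U → X → X → ℝ)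
    (hqtrans_pos : ∀ t u x x', 0 < qtrans t u x x')
    (hqtrans_sum : ∀ t u x, ∑ x', qtrans t u x x' = 1) :
    -- ELBO  L = ∑_{u,x} Q(u,x) log (P(u,x) / Q(u,x))
    (∑ u : U, ∑ x : Fin (T + 1) → X,
      (qU u * q0 (x 0) * ∏ t : Fin T, qtrans t u (x t.castSucc) (x t.succ)) *
        Real.log
          ((pU u * p0 (x 0) *
              ∏ t : Fin T, emit (x t.succ) (y t) * trans u (x t.castSucc) (x t.succ)) /
            (qU u * q0 (x 0) * ∏ t : Fin T, qtrans t u (x t.castSucc) (x t.succ))))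
    =
    -- term 1: reconstruction
    (∑ u : U, ∑ x : Fin (T + 1) → X,
      (qU u * q0 (x 0) * ∏ t : Fin T, qtrans t u (x t.castSucc) (x t.succ)) *
        ∑ t : Fin T, Real.log (emit (x t.succ) (y t)))
    -- term 2: KL(q0 ‖ p0)
    - (∑ x : X, q0 x * Real.log (q0 x / p0 x))
    -- term 3: KL(qU ‖ pU)
    - (∑ u : U, qU u * Real.log (qU u / pU u))
    -- term 4: transition regularization
    - ∑ u : U, ∑ x : Fin (T + 1) → X,
        (qU u * q0 (x 0) * ∏ t : Fin T, qtrans t u (x t.castSucc) (x t.succ)) *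
          ∑ t : Fin T,
            Real.log (qtrans t u (x t.castSucc) (x t.succ) /
              trans u (x t.castSucc) (x t.succ)) := by
  have hlog : ∀ (u : U) (x : Fin (T + 1) → X),
      Real.log ((pU u * p0 (x 0) *
              ∏ t : Fin T, emit (x t.succ) (y t) * trans u (x t.castSucc) (x t.succ)) /
            (qU u * q0 (x 0) * ∏ t : Fin T, qtrans t u (x t.castSucc) (x t.succ))) =
        (∑ t : Fin T, Real.log (emit (x t.succ) (y t))) - Real.log (q0 (x 0) / p0 (x 0))
          - Real.log (qU u / pU u)
          - ∑ t : Fin T, Real.log (qtrans t u (x t.castSucc) (x t.succ) /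
              trans u (x t.castSucc) (x t.succ)) := by
    intro u x
    have hE : ∀ t : Fin T, emit (x t.succ) (y t) ≠ 0 := fun t => (hemit_pos _ _).ne'
    have hR : ∀ t : Fin T, trans u (x t.castSucc) (x t.succ) ≠ 0 :=
      fun t => (htrans_pos _ _ _).ne'
    have hQ : ∀ t : Fin T, qtrans t u (x t.castSucc) (x t.succ) ≠ 0 :=
      fun t => (hqtrans_pos _ _ _ _).ne'
    have h1 := (hpU_pos u).ne'
    have h2 := (hp0_pos (x 0)).ne'
    have h3 := (hqU_pos u).ne'
    have h4 := (hq0_pos (x 0)).ne'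
    have hP1 := Finset.prod_ne_zero_iff.mpr fun t (_ : t ∈ Finset.univ) => mul_ne_zero (hE t) (hR t)
    have hP2 := Finset.prod_ne_zero_iff.mpr fun t (_ : t ∈ Finset.univ) => hQ t
    rw [Real.log_div (mul_ne_zero (mul_ne_zero h1 h2) hP1) (mul_ne_zero (mul_ne_zero h3 h4) hP2),
      Real.log_mul (mul_ne_zero h1 h2) hP1, Real.log_mul (mul_ne_zero h3 h4) hP2,
      Real.log_mul h1 h2, Real.log_mul h3 h4, Real.log_div h4 h2, Real.log_div h3 h1,
      Real.log_prod fun t _ => mul_ne_zero (hE t) (hR t), Real.log_prod fun t _ => hQ t,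
      Finset.sum_congr rfl fun t _ => Real.log_mul (hE t) (hR t),
      Finset.sum_congr rfl fun t _ => Real.log_div (hQ t) (hR t),
      Finset.sum_add_distrib, Finset.sum_sub_distrib]
    ring
  have hq0KL : ∑ u : U, ∑ x : Fin (T + 1) → X,
      (qU u * q0 (x 0) * ∏ t : Fin T, qtrans t u (x t.castSucc) (x t.succ)) *
        Real.log (q0 (x 0) / p0 (x 0)) = ∑ x : X, q0 x * Real.log (q0 x / p0 x) := by
    have h : ∀ u : U, ∑ x : Fin (T + 1) → X,
        (qU u * q0 (x 0) * ∏ t : Fin T, qtrans t u (x t.castSucc) (x t.succ)) *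
          Real.log (q0 (x 0) / p0 (x 0)) = qU u * ∑ x : X, q0 x * Real.log (q0 x / p0 x) := by
      intro u
      rw [← sum_path_mul_prod (fun t => qtrans t u) (fun t => hqtrans_sum t u)
        (fun a => q0 a * Real.log (q0 a / p0 a)), Finset.mul_sum]
      exact Finset.sum_congr rfl fun x _ => by ring
    rw [Finset.sum_congr rfl fun u _ => h u, ← Finset.sum_mul, hqU_sum, one_mul]
  have hqUKL : ∑ u : U, ∑ x : Fin (T + 1) → X,
      (qU u * q0 (x 0) * ∏ t : Fin T, qtrans t u (x t.castSucc) (x t.succ)) *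
        Real.log (qU u / pU u) = ∑ u : U, qU u * Real.log (qU u / pU u) := by
    refine Finset.sum_congr rfl fun u _ => ?_
    have h := sum_path_mul_prod (fun t => qtrans t u) (fun t => hqtrans_sum t u) q0
    rw [hq0_sum] at h
    rw [← Finset.sum_mul]
    simp only [mul_assoc (qU u), ← Finset.mul_sum, h, mul_one]
  simp only [hlog, mul_sub, Finset.sum_sub_distrib, hq0KL, hqUKL]
end

section
/- In the discrete GPSSM setting with the filtering recursion, if the exact-equality hypotheses (A1) and (A2) hold, then the ELBO equals L = ∑_u qU u · Real.log (M u) − KL(q0‖p0) − KL(qU‖pU), i.e., the ELBO is the qU-expectation of the log marginal likelihood of the observations given the inducing outputs, minus the two KL regularization terms. (Paper's Proposition 1, with the paper's two approximations taken as exact equalities.) -/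
/-!
Write `c u t` for the normalizing constant of the filter and
`s u t x' = ∑ x, trans u x' x * emit x (y t)` for the one-step predictive likelihood from `x'`.
The filter is strictly positive, so (A1) can be cancelled and says that `s u t x' = c u t` does not
depend on `x'`. Then (A2) becomes `trans u x' x * emit x (y t) = c u t * qtrans t u x' x`, so along
every trajectory the model density is `pU u * p0 (x 0) * (∏ t, c u t) * ∏ t, qtrans ...`.
Two consequences follow from the fact that a Markov chain's trajectory weights sum to the total
mass of the initial weight (`sum_traj`): the marginal likelihood is `M u = ∏ t, c u t`, and in the
ELBO `log (P / Q) = log (M u) - log (q0 / p0) - log (qU / pU)` depends on the trajectory only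
through `x 0`, so averaging against `Q` gives the claim.
-/

open Finset

/-- Per-step observation likelihood `ℓ t x = emit x (y t)` (for `t < T`),
extended arbitrarily (by `1`) beyond the horizon `T`, where it is never used. -/
noncomputable def obsLik {X Y : Type} (T : ℕ) (y : Fin T → Y) (emit : X → Y → ℝ)
    (t : ℕ) (x : X) : ℝ :=
  if h : t < T then emit x (y ⟨t, h⟩) else 1

/-- The normalized filtering recursion:
`filt 0 = p0`, and
`filt (t+1) x = (∑ x', filt t x' * trans x' x) * ℓ t x / c t`,
where `c t = ∑ x, (∑ x', filt t x' * trans x' x) * ℓ t x` is the per-step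
normalization constant. -/
noncomputable def filt {X : Type} [Fintype X] (p0 : X → ℝ) (trans : X → X → ℝ)
    (ℓ : ℕ → X → ℝ) : ℕ → X → ℝ
  | 0 => p0
  | t + 1 => fun x =>
      (∑ x' : X, filt p0 trans ℓ t x' * trans x' x) * ℓ t x /
        ∑ x'' : X, (∑ x' : X, filt p0 trans ℓ t x' * trans x' x'') * ℓ t x''

/-- The per-step normalization constant `c t = p(y_t | y_{1:t-1})` of the
filtering recursion. -/
noncomputable def normConst {X : Type} [Fintype X] (p0 : X → ℝ) (trans : X → X → ℝ)
    (ℓ : ℕ → X → ℝ) (t : ℕ) : ℝ :=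
  ∑ x : X, (∑ x' : X, filt p0 trans ℓ t x' * trans x' x) * ℓ t x

/-- Trajectories of a (time-inhomogeneous) Markov chain with initial weight `f` and stochastic
kernels `k t` have total mass `∑ a, f a`. -/
lemma sum_traj {X : Type} [Fintype X] (n : ℕ) (f : X → ℝ) (k : Fin n → X → X → ℝ)
    (hk : ∀ t a, ∑ b, k t a b = 1) :
    ∑ x : Fin (n + 1) → X, f (x 0) * ∏ t : Fin n, k t (x t.castSucc) (x t.succ) = ∑ a, f a := by
  induction n generalizing f with
  | zero =>
    simpa using (Equiv.funUnique (Fin 1) X).sum_comp f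
  | succ n ih =>
    rw [← (Fin.consEquiv fun _ : Fin (n + 2) => X).sum_comp, Fintype.sum_prod_type]
    refine Finset.sum_congr rfl fun a _ => ?_
    -- Condition on the first state `a`: the tail is a chain with initial weight `f a * k 0 a ·`.
    have h := ih (fun b => f a * k 0 a b) (fun t => k t.succ) (fun t => hk t.succ)
    rw [← Finset.mul_sum, hk, mul_one] at h
    rw [← h]
    refine Finset.sum_congr rfl fun x _ => ?_
    simp [Fin.consEquiv, Fin.prod_univ_succ, mul_assoc]

lemma filt_pos {X : Type} [Fintype X] [Nonempty X] (p0 : X → ℝ) (trans : X → X → ℝ)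
    (ℓ : ℕ → X → ℝ) (h0 : ∀ x, 0 < p0 x) (ht : ∀ x x', 0 < trans x x') (hl : ∀ t x, 0 < ℓ t x)
    (t : ℕ) (x : X) : 0 < filt p0 trans ℓ t x := by
  induction t generalizing x with
  | zero => exact h0 x
  | succ t ih =>
    have hp : ∀ x, 0 < (∑ x' : X, filt p0 trans ℓ t x' * trans x' x) * ℓ t x := fun x =>
      mul_pos (Finset.sum_pos (fun x' _ => mul_pos (ih x') (ht x' x)) Finset.univ_nonempty) (hl t x)
    exact div_pos (hp x) (Finset.sum_pos (fun x _ => hp x) Finset.univ_nonempty)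

lemma obsLik_pos {X Y : Type} (T : ℕ) (y : Fin T → Y) (emit : X → Y → ℝ)
    (h : ∀ x yy, 0 < emit x yy) (t : ℕ) (x : X) : 0 < obsLik T y emit t x := by
  unfold obsLik
  split_ifs
  · exact h _ _
  · exact one_pos

/-- **Paper's Proposition 1 (discrete GPSSM setting, with the paper's two
approximations (A1), (A2) taken as exact equalities).**
The ELBO equals the `qU`-expectation of the log marginal likelihood of the
observations given the inducing outputs, minus the two KL regularization terms. -/
theorem gpssm_elbo_eq_expected_log_marginal
    {T : ℕ} (hT : 1 ≤ T)
    {U X Y : Type} [Fintype U] [Fintype X] [Fintype Y]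
    [Nonempty U] [Nonempty X] [Nonempty Y]
    (y : Fin T → Y)
    (pU : U → ℝ) (hpU_pos : ∀ u, 0 < pU u) (hpU_sum : ∑ u, pU u = 1)
    (p0 : X → ℝ) (hp0_pos : ∀ x, 0 < p0 x) (hp0_sum : ∑ x, p0 x = 1)
    (trans : U → X → X → ℝ) (htrans_pos : ∀ u x x', 0 < trans u x x')
    (htrans_sum : ∀ u x, ∑ x', trans u x x' = 1)
    (emit : X → Y → ℝ) (hemit_pos : ∀ x yy, 0 < emit x yy)
    (qU : U → ℝ) (hqU_pos : ∀ u, 0 < qU u) (hqU_sum : ∑ u, qU u = 1)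
    (q0 : X → ℝ) (hq0_pos : ∀ x, 0 < q0 x) (hq0_sum : ∑ x, q0 x = 1)
    (qtrans : Fin T → U → X → X → ℝ)
    (hqtrans_pos : ∀ t u x x', 0 < qtrans t u x x')
    (hqtrans_sum : ∀ t u x, ∑ x', qtrans t u x x' = 1)
    -- (A1): the one-step-ahead smoothing marginal equals the filtering distribution
    (hA1 : ∀ (u : U) (t : Fin T) (x' : X),
      filt p0 (trans u) (obsLik T y emit) t x' *
          (∑ x : X, trans u x' x * emit x (y t)) /
          normConst p0 (trans u) (obsLik T y emit) t
        = filt p0 (trans u) (obsLik T y emit) t x')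
    -- (A2): the variational transition equals the exact one-step posterior conditional
    (hA2 : ∀ (t : Fin T) (u : U) (x' x : X),
      qtrans t u x' x =
        trans u x' x * emit x (y t) / ∑ x'' : X, trans u x' x'' * emit x'' (y t)) :
    -- ELBO  L = ∑_{u,x} Q(u,x) log (P(u,x) / Q(u,x))
    (∑ u : U, ∑ x : Fin (T + 1) → X,
      (qU u * q0 (x 0) * ∏ t : Fin T, qtrans t u (x t.castSucc) (x t.succ)) *
        Real.log
          ((pU u * p0 (x 0) *
              ∏ t : Fin T, emit (x t.succ) (y t) * trans u (x t.castSucc) (x t.succ)) /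
            (qU u * q0 (x 0) * ∏ t : Fin T, qtrans t u (x t.castSucc) (x t.succ))))
    =
    -- expected log marginal likelihood  ∑_u qU u * log (M u)
    (∑ u : U, qU u *
      Real.log (∑ x : Fin (T + 1) → X,
        p0 (x 0) * ∏ t : Fin T, trans u (x t.castSucc) (x t.succ) * emit (x t.succ) (y t)))
    -- KL(q0 ‖ p0)
    - (∑ x : X, q0 x * Real.log (q0 x / p0 x))
    -- KL(qU ‖ pU)
    - (∑ u : U, qU u * Real.log (qU u / pU u)) := by
  have hs_pos : ∀ u (t : Fin T) x', 0 < ∑ x : X, trans u x' x * emit x (y t) := fun u t x' =>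
    Finset.sum_pos (fun x _ => mul_pos (htrans_pos u x' x) (hemit_pos x _)) Finset.univ_nonempty
  obtain ⟨c, hcdef⟩ : ∃ c : U → Fin T → ℝ,
      ∀ u t, c u t = normConst p0 (trans u) (obsLik T y emit) t := ⟨_, fun _ _ => rfl⟩
  have hs : ∀ u (t : Fin T) x', ∑ x : X, trans u x' x * emit x (y t) = c u t := by
    intro u t x'
    have hf := filt_pos p0 (trans u) (obsLik T y emit) hp0_pos (htrans_pos u)
      (obsLik_pos T y emit hemit_pos) t x'
    have h := hA1 u t x'
    rw [← hcdef] at h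
    -- If `c u t` were zero, the left side of (A1) would be zero by the convention `a / 0 = 0`.
    have hc : c u t ≠ 0 := by
      intro h0
      rw [h0, div_zero] at h
      exact hf.ne h
    rw [div_eq_iff hc] at h
    exact mul_left_cancel₀ hf.ne' h
  have hc_pos : ∀ u t, 0 < c u t := fun u t => hs u t (Classical.arbitrary X) ▸ hs_pos u t _
  have hq : ∀ u (t : Fin T) x' x, trans u x' x * emit x (y t) = c u t * qtrans t u x' x := by
    intro u t x' x
    rw [hA2, hs, mul_div_cancel₀ _ (hc_pos u t).ne']
  have hprod : ∀ u (x : Fin (T + 1) → X),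
      ∏ t : Fin T, trans u (x t.castSucc) (x t.succ) * emit (x t.succ) (y t) =
        (∏ t, c u t) * ∏ t : Fin T, qtrans t u (x t.castSucc) (x t.succ) := by
    intro u x
    simp only [hq, Finset.prod_mul_distrib]
  have hM : ∀ u, ∑ x : Fin (T + 1) → X, p0 (x 0) *
      ∏ t : Fin T, trans u (x t.castSucc) (x t.succ) * emit (x t.succ) (y t) = ∏ t, c u t := by
    intro u
    simp only [hprod, mul_left_comm (p0 _), ← Finset.mul_sum]
    rw [sum_traj T p0 (fun t => qtrans t u) (fun t => hqtrans_sum t u), hp0_sum, mul_one]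
  have hlog : ∀ u (x : Fin (T + 1) → X),
      Real.log ((pU u * p0 (x 0) *
          ∏ t : Fin T, emit (x t.succ) (y t) * trans u (x t.castSucc) (x t.succ)) /
        (qU u * q0 (x 0) * ∏ t : Fin T, qtrans t u (x t.castSucc) (x t.succ))) =
      Real.log (∏ t, c u t) - Real.log (q0 (x 0) / p0 (x 0)) - Real.log (qU u / pU u) := by
    intro u x
    have hC : (∏ t, c u t) ≠ 0 := (Finset.prod_pos fun t _ => hc_pos u t).ne'
    have hQ : (∏ t : Fin T, qtrans t u (x t.castSucc) (x t.succ)) ≠ 0 :=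
      (Finset.prod_pos fun t _ => hqtrans_pos t u _ _).ne'
    have h1 := (hpU_pos u).ne'
    have h2 := (hqU_pos u).ne'
    have h3 := (hp0_pos (x 0)).ne'
    have h4 := (hq0_pos (x 0)).ne'
    simp only [mul_comm (emit _ _)]
    rw [hprod, ← Real.log_div hC (div_ne_zero h4 h3),
      ← Real.log_div (div_ne_zero hC (div_ne_zero h4 h3)) (div_ne_zero h2 h1)]
    congr 1
    field_simp
  have hinner : ∀ u, ∑ x : Fin (T + 1) → X,
      (qU u * q0 (x 0) * ∏ t : Fin T, qtrans t u (x t.castSucc) (x t.succ)) *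
        (Real.log (∏ t, c u t) - Real.log (q0 (x 0) / p0 (x 0)) - Real.log (qU u / pU u)) =
      qU u * Real.log (∏ t, c u t) - qU u * (∑ a, q0 a * Real.log (q0 a / p0 a))
        - qU u * Real.log (qU u / pU u) := by
    intro u
    -- The logarithm depends only on `x 0`, so it is absorbed into the initial weight of the chain.
    have h := sum_traj T
      (fun a => qU u * q0 a *
        (Real.log (∏ t, c u t) - Real.log (q0 a / p0 a) - Real.log (qU u / pU u)))
      (fun t => qtrans t u) (fun t => hqtrans_sum t u)
    simp only [mul_right_comm _ (∏ t : Fin T, qtrans t u _ _)]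
    rw [h]
    simp only [mul_sub, Finset.sum_sub_distrib, mul_assoc, ← Finset.mul_sum]
    rw [← Finset.sum_mul, ← Finset.sum_mul, hq0_sum, one_mul, one_mul]
  simp only [hlog, hinner, hM, Finset.sum_sub_distrib]
  rw [← Finset.sum_mul, hqU_sum, one_mul]
end

section
/- Let n d : ℕ, let P : Matrix (Fin n) (Fin n) ℝ be positive semidefinite, let R : Matrix (Fin d) (Fin d) ℝ be positive definite, and let C : Matrix (Fin d) (Fin n) ℝ. Then the Kalman-updated covariance P − P * Cᵀ * (C * P * Cᵀ + R)⁻¹ * C * P is positive semidefinite. (Validity of the filtering covariance in Eq. (12b) of the paper.) -/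
open Matrix

/-!
With the Kalman gain `K = P Cᵀ S⁻¹`, where `S = C P Cᵀ + R` is positive definite and hence
invertible, the updated covariance equals its *Joseph form*
`(1 - K C) P (1 - K C)ᵀ + K R Kᵀ`, a sum of congruence transforms of the positive semidefinite
matrices `P` and `R`. The identity follows by expanding and using only `K S = P Cᵀ`.
-/

/-- The Joseph form of the covariance update, valid for any gain `K` with
`K (C P Cᵀ + R) = P Cᵀ`. -/
lemma joseph_form {n d : ℕ} (P : Matrix (Fin n) (Fin n) ℝ) (R : Matrix (Fin d) (Fin d) ℝ)
    (C : Matrix (Fin d) (Fin n) ℝ) (K : Matrix (Fin n) (Fin d) ℝ)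
    (hK : K * (C * P * Cᵀ + R) = P * Cᵀ) :
    (1 - K * C) * P * (1 - K * C)ᵀ + K * R * Kᵀ = P - K * C * P := by
  have expand : (1 - K * C) * P * (1 - K * C)ᵀ + K * R * Kᵀ
      = P - K * C * P - P * Cᵀ * Kᵀ + K * (C * P * Cᵀ + R) * Kᵀ := by
    simp only [transpose_sub, transpose_one, transpose_mul, Matrix.sub_mul, Matrix.mul_sub,
      Matrix.mul_add, Matrix.add_mul, Matrix.one_mul, Matrix.mul_one, Matrix.mul_assoc]
    abel
  rw [expand, hK, sub_add_cancel]

/-- **Validity of the Kalman filtering covariance (Eq. (12b) of the paper).**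
If `P` is positive semidefinite and `R` is positive definite, then the
Kalman-updated covariance `P − P Cᵀ (C P Cᵀ + R)⁻¹ C P` is positive semidefinite. -/
theorem kalman_updated_covariance_posSemidef
    {n d : ℕ}
    (P : Matrix (Fin n) (Fin n) ℝ) (hP : P.PosSemidef)
    (R : Matrix (Fin d) (Fin d) ℝ) (hR : R.PosDef)
    (C : Matrix (Fin d) (Fin n) ℝ) :
    (P - P * Cᵀ * (C * P * Cᵀ + R)⁻¹ * C * P).PosSemidef := by
  have hS : (C * P * Cᵀ + R).PosDef := by
    simpa only [conjTranspose_eq_transpose_of_trivial] using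
      Matrix.PosDef.posSemidef_add (hP.mul_mul_conjTranspose_same C) hR
  have hdet : IsUnit (C * P * Cᵀ + R).det := (isUnit_iff_isUnit_det _).mp hS.isUnit
  rw [← joseph_form P R C (P * Cᵀ * (C * P * Cᵀ + R)⁻¹)
    (nonsing_inv_mul_cancel_right _ _ hdet)]
  simpa only [conjTranspose_eq_transpose_of_trivial] using
    (hP.mul_mul_conjTranspose_same (1 - P * Cᵀ * (C * P * Cᵀ + R)⁻¹ * C)).add
      (hR.posSemidef.mul_mul_conjTranspose_same (P * Cᵀ * (C * P * Cᵀ + R)⁻¹))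
end
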